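/- Shallow splitting for LBV: if the structure [(R,T),P] is provable in LBV, then there exist structures P₁ and P₂ such that there is a derivation in LBV with premise [P₁,P₂] and conclusion P, and both [R,P₁] and [T,P₂] are provable in LBV. -/

import Mathlib

/-!
The proof passes through a cut-free one-sided sequent calculus `Seq` on multisets of structures:
multiplicative linear logic with mix and a single self-dual unit, in which a copar is introduced
from two disjoint sequents.

* LBV proofs translate into it (`seq_of_proof`). The order `A ≤ B`, meaning that `B` may replace
  `A` in every derivable sequent, contains the structural equivalence, is preserved by contexts and
  contains the two rules of LBV. No cut is needed for this: each inequality permutes a replacement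
  upwards through a derivation until the replaced formula is principal. The permutation argument is
  done once, for an arbitrary property `Φ` of the surrounding sequent, in `Seq.elim`.
* The calculus translates back into LBV by reading a sequent as the par of its members
  (`proof_of_seq`).

Splitting is then one more instance of `Seq.elim`. Take for `Φ Γ` the statement that some
`[P₁,P₂]` derives the par of `Γ`, with `[R,P₁]` and `[T,P₂]` provable. Where `(R,T)` is principal,
the contexts of the two premises are `P₁` and `P₂`; every rule below that point only extends the
derivation of the par of `Γ`.
-/

/-!
The deep-inference system LBV (the `BV`-free core system of the calculus of
structures of Guglielmi).  Structures are built from the unit `◦`, atoms `a`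
and negated atoms `ā` by par `[P,Q]` and copar `(P,Q)`, and are identified
modulo the congruence generated by associativity, commutativity and the
unit laws `[P,◦]=P`, `(P,◦)=P`.  The rules `ai↓`, `s` (and the atomic cut
`ai↑`) apply inside an arbitrary one-hole context and modulo the
equivalence.
-/

namespace LBV

/-- Structures: the unit `◦`, atoms, negated atoms, par `[P,Q]` and
copar `(P,Q)`. -/
inductive St : Type where
  | unit : St
  | pos  : ℕ → St
  | neg  : ℕ → St
  | par  : St → St → St
  | cop  : St → St → St
deriving DecidableEq

/-- Negation: `¬◦ = ◦`, `¬[P,Q] = (¬P,¬Q)`, `¬(P,Q) = [¬P,¬Q]`, `¬¬P = P`. -/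
def St.negS : St → St
  | .unit => .unit
  | .pos a => .neg a
  | .neg a => .pos a
  | .par P Q => .cop P.negS Q.negS
  | .cop P Q => .par P.negS Q.negS

/-- Atoms are the propositional symbols and their negations. -/
def St.isAtom : St → Prop
  | .pos _ => True
  | .neg _ => True
  | _ => False

/-- Syntactic equivalence of structures: the smallest congruence generated
by associativity and commutativity of par and copar and the unit laws
`[P,◦]=P` and `(P,◦)=P`. -/
inductive Equiv : St → St → Prop where
  | refl (P : St) : Equiv P P
  | symm {P Q : St} : Equiv P Q → Equiv Q P
  | trans {P Q R : St} : Equiv P Q → Equiv Q R → Equiv P R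
  | parComm (P Q : St) : Equiv (.par P Q) (.par Q P)
  | copComm (P Q : St) : Equiv (.cop P Q) (.cop Q P)
  | parAssoc (P Q R : St) : Equiv (.par (.par P Q) R) (.par P (.par Q R))
  | copAssoc (P Q R : St) : Equiv (.cop (.cop P Q) R) (.cop P (.cop Q R))
  | parUnit (P : St) : Equiv (.par P .unit) P
  | copUnit (P : St) : Equiv (.cop P .unit) P
  | parCongr {P P' Q Q' : St} :
      Equiv P P' → Equiv Q Q' → Equiv (.par P Q) (.par P' Q')
  | copCongr {P P' Q Q' : St} :
      Equiv P P' → Equiv Q Q' → Equiv (.cop P Q) (.cop P' Q')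

/-- One-hole contexts. -/
inductive Ctx : Type where
  | hole : Ctx
  | parL : Ctx → St → Ctx
  | parR : St → Ctx → Ctx
  | copL : Ctx → St → Ctx
  | copR : St → Ctx → Ctx

/-- Plugging a structure into the hole of a context. -/
def Ctx.fill : Ctx → St → St
  | .hole, P => P
  | .parL C Q, P => .par (C.fill P) Q
  | .parR Q C, P => .par Q (C.fill P)
  | .copL C Q, P => .cop (C.fill P) Q
  | .copR Q C, P => .cop Q (C.fill P)

/-- Names of the rules: interaction `ai↓`, co-interaction (atomic cut)
`ai↑`, and switch `s`. -/
inductive Rule : Type where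
  | aiDown | aiUp | s
deriving DecidableEq

/-- The rules read at the root of a structure (premise on the left,
conclusion on the right). -/
inductive RootStep : Rule → St → St → Prop where
  | aiDown (A : St) (h : A.isAtom) : RootStep .aiDown .unit (.par A A.negS)
  | aiUp (A : St) (h : A.isAtom) : RootStep .aiUp (.cop A A.negS) .unit
  | s (P Q R : St) : RootStep .s (.cop P (.par Q R)) (.par (.cop P Q) R)

/-- One inference step using a rule from the set `Rs`, applied inside an
arbitrary context and modulo the equivalence. -/
def Step (Rs : Set Rule) (P Q : St) : Prop :=
  ∃ r ∈ Rs, ∃ (C : Ctx) (P' Q' : St),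
    RootStep r P' Q' ∧ Equiv P (C.fill P') ∧ Equiv (C.fill Q') Q

/-- Derivations over an arbitrary step relation: a finite sequence of rule
instances from the premise to the conclusion (modulo the equivalence). -/
inductive Deriv (Stp : St → St → Prop) : St → St → Prop where
  | eqv {P Q : St} : Equiv P Q → Deriv Stp P Q
  | step {P Q R : St} : Stp P Q → Deriv Stp Q R → Deriv Stp P R

/-- The rules of the system LBV. -/
def LBVRules : Set Rule := {.aiDown, .s}

/-- Derivations in LBV. -/
def DerivLBV (P Q : St) : Prop := Deriv (Step LBVRules) P Q

/-- A proof of `Q` in LBV is a derivation from the unit `◦` to `Q`. -/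
def ProofLBV (Q : St) : Prop := DerivLBV .unit Q

end LBV

namespace LBV

/-! ### The sequent calculus -/

/-- Cut-free derivability of a sequent, read as the par of its members: multiplicative linear logic
with mix (binary and nullary), where the single unit may be added freely. -/
inductive Seq : Multiset St → Prop where
  | nil : Seq 0
  | ax (a : ℕ) : Seq {St.pos a, St.neg a}
  | mix {Γ Δ : Multiset St} : Seq Γ → Seq Δ → Seq (Γ + Δ)
  | unit {Γ : Multiset St} : Seq Γ → Seq (St.unit ::ₘ Γ)
  | par {A B : St} {Γ : Multiset St} : Seq (A ::ₘ B ::ₘ Γ) → Seq (St.par A B ::ₘ Γ)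
  | cop {A B : St} {Γ Δ : Multiset St} :
      Seq (A ::ₘ Γ) → Seq (B ::ₘ Δ) → Seq (St.cop A B ::ₘ (Γ + Δ))

/-- `Φ` is stable under every rule of the calculus acting on the premise it holds for, the other
premise of a binary rule being an arbitrary derivable sequent. -/
structure Stable (Φ : Multiset St → Prop) : Prop where
  mix {Γ Δ : Multiset St} : Φ Γ → Seq Δ → Φ (Γ + Δ)
  unit {Γ : Multiset St} : Φ Γ → Φ (St.unit ::ₘ Γ)
  par {A B : St} {Γ : Multiset St} : Φ (A ::ₘ B ::ₘ Γ) → Φ (St.par A B ::ₘ Γ)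
  copL {A B : St} {Γ Δ : Multiset St} :
    Φ (A ::ₘ Γ) → Seq (B ::ₘ Δ) → Φ (St.cop A B ::ₘ (Γ + Δ))
  copR {A B : St} {Γ Δ : Multiset St} :
    Seq (A ::ₘ Γ) → Φ (B ::ₘ Δ) → Φ (St.cop A B ::ₘ (Γ + Δ))

/-- Whenever `F` is introduced by its own rule, `Φ` holds for the rest of the sequent. -/
def Principal (Φ : Multiset St → Prop) : St → Prop
  | .unit => ∀ Γ, Seq Γ → Φ Γ
  | .pos a => Φ {St.neg a}
  | .neg a => Φ {St.pos a}
  | .par A B => ∀ Γ, Seq (A ::ₘ B ::ₘ Γ) → Φ Γ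
  | .cop A B => ∀ Γ Δ, Seq (A ::ₘ Γ) → Seq (B ::ₘ Δ) → Φ (Γ + Δ)

/-- A property that holds beside `F` when `F` is principal, and is stable under the rules applied
below, holds beside `F` in every derivable sequent. -/
theorem Seq.elim {Φ : Multiset St → Prop} (hΦ : Stable Φ) {F : St} (hF : Principal Φ F)
    {Γ : Multiset St} (h : Seq (F ::ₘ Γ)) : Φ Γ := by
  generalize hS : F ::ₘ Γ = S at h
  induction h generalizing Γ with
  | nil => exact absurd hS (Multiset.cons_ne_zero)
  | ax a =>
    rcases Multiset.cons_eq_cons.1 hS with ⟨rfl, rfl⟩ | ⟨-, cs, rfl, h2⟩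
    · exact hF
    · obtain ⟨rfl, rfl⟩ := (Multiset.singleton_eq_cons_iff _).1 h2
      exact hF
  | @mix Γ₁ Γ₂ h1 h2 ih1 ih2 =>
    have hmem : F ∈ Γ₁ + Γ₂ := hS ▸ Multiset.mem_cons_self F Γ
    rcases Multiset.mem_add.1 hmem with hm | hm
    · obtain ⟨cs, rfl⟩ := Multiset.exists_cons_of_mem hm
      rw [Multiset.cons_add, Multiset.cons_inj_right] at hS
      exact hS ▸ hΦ.mix (ih1 rfl) h2
    · obtain ⟨cs, rfl⟩ := Multiset.exists_cons_of_mem hm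
      rw [Multiset.add_cons, Multiset.cons_inj_right, add_comm] at hS
      exact hS ▸ hΦ.mix (ih2 rfl) h1
  | unit h1 ih =>
    rcases Multiset.cons_eq_cons.1 hS with ⟨rfl, rfl⟩ | ⟨-, cs, rfl, rfl⟩
    · exact hF _ h1
    · exact hΦ.unit (ih rfl)
  | @par A B _ h1 ih =>
    rcases Multiset.cons_eq_cons.1 hS with ⟨rfl, rfl⟩ | ⟨-, cs, rfl, rfl⟩
    · exact hF _ h1
    · refine hΦ.par (ih ?_)
      rw [Multiset.cons_swap F A, Multiset.cons_swap F B]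
  | @cop A B Γ₁ Γ₂ h1 h2 ih1 ih2 =>
    rcases Multiset.cons_eq_cons.1 hS with ⟨rfl, rfl⟩ | ⟨-, cs, rfl, hT⟩
    · exact hF _ _ h1 h2
    have hmem : F ∈ Γ₁ + Γ₂ := hT.symm ▸ Multiset.mem_cons_self F cs
    rcases Multiset.mem_add.1 hmem with hm | hm
    · obtain ⟨ds, rfl⟩ := Multiset.exists_cons_of_mem hm
      rw [Multiset.cons_add, Multiset.cons_inj_right] at hT
      exact hT ▸ hΦ.copL (ih1 (Multiset.cons_swap _ _ _)) h2
    · obtain ⟨ds, rfl⟩ := Multiset.exists_cons_of_mem hm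
      rw [Multiset.add_cons, Multiset.cons_inj_right] at hT
      exact hT ▸ hΦ.copR h1 (ih2 (Multiset.cons_swap _ _ _))

theorem stable_seq_add (X : Multiset St) : Stable (fun Γ => Seq (X + Γ)) where
  mix h1 h2 := by rw [← add_assoc]; exact h1.mix h2
  unit h := by rw [Multiset.add_cons]; exact h.unit
  par h := by
    simp only [Multiset.add_cons] at h ⊢
    exact h.par
  copL h1 h2 := by
    simp only [Multiset.add_cons] at h1 ⊢
    rw [← add_assoc]; exact h1.cop h2
  copR h1 h2 := by
    simp only [Multiset.add_cons] at h2 ⊢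
    rw [add_left_comm]; exact h1.cop h2

theorem Seq.unit_inv {Γ : Multiset St} (h : Seq (St.unit ::ₘ Γ)) : Seq Γ := by
  have := Seq.elim (stable_seq_add 0) (F := .unit) (fun Γ h => by simpa using h) h
  simpa using this

theorem Seq.par_inv {A B : St} {Γ : Multiset St} (h : Seq (St.par A B ::ₘ Γ)) :
    Seq (A ::ₘ B ::ₘ Γ) := by
  have := Seq.elim (stable_seq_add {A, B}) (F := .par A B) (fun Γ h => by simpa using h) h
  simpa using this

/-- The copar rule is not invertible, but a copar may be replaced by `X` throughout as soon as it
may be where it is principal. -/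
theorem Seq.cop_elim {A B : St} (X : Multiset St)
    (hX : ∀ Γ Δ, Seq (A ::ₘ Γ) → Seq (B ::ₘ Δ) → Seq (X + (Γ + Δ)))
    {Γ : Multiset St} (h : Seq (St.cop A B ::ₘ Γ)) : Seq (X + Γ) :=
  Seq.elim (stable_seq_add X) (F := .cop A B) hX h

/-! ### From LBV to the sequent calculus -/

/-- `B` may replace `A` in every derivable sequent. -/
def Le (A B : St) : Prop := ∀ Γ, Seq (A ::ₘ Γ) → Seq (B ::ₘ Γ)

theorem Le.par {A A' B B' : St} (hA : Le A A') (hB : Le B B') :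
    Le (.par A B) (.par A' B') := fun Γ h => by
  have h1 := hA _ h.par_inv
  rw [Multiset.cons_swap] at h1
  have h2 := hB _ h1
  rw [Multiset.cons_swap] at h2
  exact h2.par

theorem Le.cop {A A' B B' : St} (hA : Le A A') (hB : Le B B') :
    Le (.cop A B) (.cop A' B') := fun Γ h => by
  have := h.cop_elim {St.cop A' B'} fun Γ Δ h1 h2 => by
    rw [Multiset.singleton_add]; exact (hA _ h1).cop (hB _ h2)
  simpa using this

theorem Le.parComm (A B : St) : Le (.par A B) (.par B A) := fun Γ h => by
  have h := h.par_inv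
  rw [Multiset.cons_swap] at h
  exact h.par

theorem Le.copComm (A B : St) : Le (.cop A B) (.cop B A) := fun Γ h => by
  have := h.cop_elim {St.cop B A} fun Γ Δ h1 h2 => by
    rw [Multiset.singleton_add, add_comm]; exact h2.cop h1
  simpa using this

theorem Le.trans {A B C : St} (h : Le A B) (h' : Le B C) : Le A C := fun Γ x => h' Γ (h Γ x)

theorem Le.parAssoc (A B C : St) : Le (.par (.par A B) C) (.par A (.par B C)) := fun Γ h => by
  have h := h.par_inv.par_inv
  rw [Multiset.cons_swap] at h
  rw [Multiset.cons_swap A] at h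
  have h := h.par
  rw [Multiset.cons_swap] at h
  exact h.par

theorem Le.copAssoc (A B C : St) : Le (.cop (.cop A B) C) (.cop A (.cop B C)) := fun Γ h => by
  have := h.cop_elim {St.cop A (.cop B C)} fun Γ Δ h1 h2 => by
    -- The context `Δ` of `C` is carried along while the inner copar is taken apart.
    have := h1.cop_elim (St.cop A (.cop B C) ::ₘ Δ) fun Γ₁ Γ₂ h3 h4 => by
      have h := h3.cop (h4.cop h2)
      convert h using 1
      rw [Multiset.cons_add]; congr 1; abel
    convert this using 1
    rw [Multiset.singleton_add, Multiset.cons_add, add_comm]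
  simpa using this

theorem Le.of_equiv {A B : St} (h : Equiv A B) : Le A B ∧ Le B A := by
  induction h with
  | refl P => exact ⟨fun _ h => h, fun _ h => h⟩
  | symm _ ih => exact ih.symm
  | trans _ _ ih1 ih2 => exact ⟨ih1.1.trans ih2.1, ih2.2.trans ih1.2⟩
  | parComm P Q => exact ⟨Le.parComm _ _, Le.parComm _ _⟩
  | copComm P Q => exact ⟨Le.copComm _ _, Le.copComm _ _⟩
  | parAssoc P Q R =>
    refine ⟨Le.parAssoc _ _ _, ?_⟩
    exact (Le.parComm _ _).trans <| ((Le.parComm _ _).par fun _ h => h).trans <|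
      (Le.parAssoc _ _ _).trans <| (Le.parComm _ _).trans <| (Le.parComm _ _).par fun _ h => h
  | copAssoc P Q R =>
    refine ⟨Le.copAssoc _ _ _, ?_⟩
    exact (Le.copComm _ _).trans <| ((Le.copComm _ _).cop fun _ h => h).trans <|
      (Le.copAssoc _ _ _).trans <| (Le.copComm _ _).trans <| (Le.copComm _ _).cop fun _ h => h
  | parUnit P =>
    refine ⟨fun Γ h => ?_, fun Γ h => ?_⟩
    · have h := h.par_inv
      rw [Multiset.cons_swap] at h
      exact h.unit_inv
    · have h := h.unit
      rw [Multiset.cons_swap] at h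
      exact h.par
  | copUnit P =>
    refine ⟨fun Γ h => ?_, fun Γ h => ?_⟩
    · have := h.cop_elim {P} fun Γ Δ h1 h2 => by
        rw [Multiset.singleton_add, ← Multiset.cons_add]; exact h1.mix h2.unit_inv
      simpa using this
    · simpa using h.cop (Seq.nil.unit)
  | parCongr _ _ ih1 ih2 => exact ⟨ih1.1.par ih2.1, ih1.2.par ih2.2⟩
  | copCongr _ _ ih1 ih2 => exact ⟨ih1.1.cop ih2.1, ih1.2.cop ih2.2⟩

theorem Le.fill {A B : St} (h : Le A B) (C : Ctx) : Le (C.fill A) (C.fill B) := by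
  induction C with
  | hole => exact h
  | parL C Q ih => exact ih.par fun _ h => h
  | parR Q C ih => exact Le.par (fun _ h => h) ih
  | copL C Q ih => exact ih.cop fun _ h => h
  | copR Q C ih => exact Le.cop (fun _ h => h) ih

/-- Interaction is mix with an axiom. -/
theorem Le.aiDown {A : St} (hA : A.isAtom) : Le .unit (.par A A.negS) := fun Γ h => by
  have h := h.unit_inv
  have hax : Seq (A ::ₘ {A.negS}) := by
    cases A with
    | pos a => exact Seq.ax a
    | neg a =>
      have := Seq.ax a
      rwa [Multiset.insert_eq_cons, ← Multiset.cons_zero, Multiset.cons_swap] at this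
    | _ => exact hA.elim
  have := hax.mix h
  rw [Multiset.cons_add, Multiset.singleton_add] at this
  exact this.par

theorem Le.switch (P Q R : St) : Le (.cop P (.par Q R)) (.par (.cop P Q) R) := fun Γ h => by
  have := h.cop_elim {St.par (.cop P Q) R} fun Γ Δ h1 h2 => by
    have := h1.cop h2.par_inv
    rw [Multiset.add_cons] at this
    rw [Multiset.singleton_add]; exact this.par
  simpa using this

theorem Le.of_step {P Q : St} (h : Step LBVRules P Q) : Le P Q := by
  obtain ⟨r, hr, C, P', Q', hs, h1, h2⟩ := h
  refine (Le.of_equiv h1).1.trans <| Le.trans (Le.fill ?_ C) (Le.of_equiv h2).1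
  cases hs with
  | aiDown A h => exact Le.aiDown h
  | aiUp A h => simp [LBVRules] at hr
  | s P Q R => exact Le.switch P Q R

theorem Le.of_deriv {P Q : St} (h : DerivLBV P Q) : Le P Q := by
  induction h with
  | eqv h => exact (Le.of_equiv h).1
  | step h _ ih => exact (Le.of_step h).trans ih

theorem seq_of_proof {P : St} (h : ProofLBV P) : Seq {P} :=
  Le.of_deriv h 0 Seq.nil.unit

/-! ### From the sequent calculus to LBV -/

theorem DerivLBV.trans {P Q R : St} (h : DerivLBV P Q) (h' : DerivLBV Q R) : DerivLBV P R := by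
  induction h with
  | eqv h =>
    cases h' with
    | eqv h' => exact .eqv (h.trans h')
    | step hs h' =>
      obtain ⟨r, hr, C, P', Q', hs, h1, h2⟩ := hs
      exact .step ⟨r, hr, C, P', Q', hs, h.trans h1, h2⟩ h'
  | step hs _ ih => exact .step hs (ih h')

theorem DerivLBV.parR {P Q : St} (h : DerivLBV P Q) (X : St) :
    DerivLBV (.par X P) (.par X Q) := by
  induction h with
  | eqv h => exact .eqv (.parCongr (.refl _) h)
  | step hs _ ih =>
    obtain ⟨r, hr, C, P', Q', hs, h1, h2⟩ := hs
    exact .step ⟨r, hr, .parR X C, P', Q', hs, .parCongr (.refl _) h1, .parCongr (.refl _) h2⟩ ih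

theorem DerivLBV.parL {P Q : St} (h : DerivLBV P Q) (X : St) :
    DerivLBV (.par P X) (.par Q X) :=
  DerivLBV.trans (.eqv (.parComm _ _)) <| (h.parR X).trans (.eqv (.parComm _ _))

theorem DerivLBV.copR {P Q : St} (h : DerivLBV P Q) (X : St) :
    DerivLBV (.cop X P) (.cop X Q) := by
  induction h with
  | eqv h => exact .eqv (.copCongr (.refl _) h)
  | step hs _ ih =>
    obtain ⟨r, hr, C, P', Q', hs, h1, h2⟩ := hs
    exact .step ⟨r, hr, .copR X C, P', Q', hs, .copCongr (.refl _) h1, .copCongr (.refl _) h2⟩ ih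

theorem DerivLBV.switch (P Q R : St) : DerivLBV (.cop P (.par Q R)) (.par (.cop P Q) R) :=
  .step ⟨.s, by simp [LBVRules], .hole, _, _, .s P Q R, .refl _, .refl _⟩ (.eqv (.refl _))

theorem ProofLBV.ax (a : ℕ) : ProofLBV (.par (.pos a) (.neg a)) :=
  .step ⟨.aiDown, by simp [LBVRules], .hole, _, _, .aiDown (.pos a) trivial, .refl _, .refl _⟩
    (.eqv (.refl _))

/-- The par of the members of a sequent. The order in which they are listed is arbitrary; it does
not matter up to the structural equivalence. -/
noncomputable def bigPar (Γ : Multiset St) : St := Γ.toList.foldr .par .unit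

theorem foldr_par_perm {l l' : List St} (h : l.Perm l') :
    Equiv (l.foldr .par .unit) (l'.foldr .par .unit) := by
  induction h with
  | nil => exact .refl _
  | cons x _ ih => exact .parCongr (.refl _) ih
  | swap x y l =>
    exact (Equiv.parAssoc _ _ _).symm.trans <|
      (Equiv.parCongr (.parComm _ _) (.refl _)).trans (.parAssoc _ _ _)
  | trans _ _ ih1 ih2 => exact ih1.trans ih2

theorem bigPar_zero : bigPar 0 = .unit := by simp [bigPar]

theorem bigPar_cons (A : St) (Γ : Multiset St) :
    Equiv (bigPar (A ::ₘ Γ)) (.par A (bigPar Γ)) := by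
  have : (A ::ₘ Γ).toList.Perm (A :: Γ.toList) := by
    rw [← Multiset.coe_eq_coe, ← Multiset.cons_coe]; simp
  exact foldr_par_perm this

theorem bigPar_singleton (A : St) : Equiv (bigPar {A}) A := by
  have := bigPar_cons A 0
  rw [bigPar_zero] at this
  exact this.trans (.parUnit A)

theorem bigPar_add (Γ Δ : Multiset St) :
    Equiv (bigPar (Γ + Δ)) (.par (bigPar Γ) (bigPar Δ)) := by
  induction Γ using Multiset.induction_on with
  | empty =>
    rw [zero_add, bigPar_zero]
    exact (Equiv.parUnit _).symm.trans (.parComm _ _)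
  | cons A Γ ih =>
    rw [Multiset.cons_add]
    exact (bigPar_cons _ _).trans <| (Equiv.parCongr (.refl _) ih).trans <|
      (Equiv.parAssoc _ _ _).symm.trans <| .parCongr (bigPar_cons _ _).symm (.refl _)

theorem deriv_mix {Γ Δ : Multiset St} (h : ProofLBV (bigPar Δ)) :
    DerivLBV (bigPar Γ) (bigPar (Γ + Δ)) :=
  DerivLBV.trans (.eqv (Equiv.parUnit _).symm) <| (h.parR _).trans (.eqv (bigPar_add _ _).symm)

theorem bigPar_unit (Γ : Multiset St) : Equiv (bigPar Γ) (bigPar (St.unit ::ₘ Γ)) :=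
  (Equiv.parUnit _).symm.trans <| (Equiv.parComm _ _).trans (bigPar_cons _ _).symm

theorem bigPar_par (A B : St) (Γ : Multiset St) :
    Equiv (bigPar (A ::ₘ B ::ₘ Γ)) (bigPar (St.par A B ::ₘ Γ)) :=
  (bigPar_cons _ _).trans <| (Equiv.parCongr (.refl _) (bigPar_cons _ _)).trans <|
    (Equiv.parAssoc _ _ _).symm.trans (bigPar_cons _ _).symm

/-- The copar rule in LBV: `[A,Γ] = [(A,◦),Γ]`, a proof of `[B,Δ]` is inserted for the unit, and
a switch moves `Δ` out of the copar. -/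
theorem deriv_copL {A B : St} {Γ Δ : Multiset St} (h : ProofLBV (bigPar (B ::ₘ Δ))) :
    DerivLBV (bigPar (A ::ₘ Γ)) (bigPar (St.cop A B ::ₘ (Γ + Δ))) := by
  have h' : ProofLBV (.par B (bigPar Δ)) := DerivLBV.trans h (.eqv (bigPar_cons _ _))
  have key : DerivLBV A (.par (.cop A B) (bigPar Δ)) :=
    DerivLBV.trans (.eqv (Equiv.copUnit _).symm) <| (h'.copR A).trans (.switch _ _ _)
  refine DerivLBV.trans (.eqv (bigPar_cons _ _)) <| (key.parL _).trans (.eqv ?_)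
  exact (Equiv.parAssoc _ _ _).trans <|
    (Equiv.parCongr (.refl _) ((Equiv.parComm _ _).trans (bigPar_add _ _).symm)).trans
      (bigPar_cons _ _).symm

theorem deriv_copR {A B : St} {Γ Δ : Multiset St} (h : ProofLBV (bigPar (A ::ₘ Γ))) :
    DerivLBV (bigPar (B ::ₘ Δ)) (bigPar (St.cop A B ::ₘ (Γ + Δ))) := by
  refine DerivLBV.trans (deriv_copL (B := A) (Δ := Γ) h) (.eqv ?_)
  rw [add_comm]
  exact (bigPar_cons _ _).trans <|
    (Equiv.parCongr (.copComm _ _) (.refl _)).trans (bigPar_cons _ _).symm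

theorem proof_of_seq {Γ : Multiset St} (h : Seq Γ) : ProofLBV (bigPar Γ) := by
  induction h with
  | nil => rw [bigPar_zero]; exact .eqv (.refl _)
  | ax a =>
    refine DerivLBV.trans (ProofLBV.ax a) (.eqv ?_)
    exact (Equiv.parCongr (.refl _) (bigPar_singleton _).symm).trans (bigPar_cons _ _).symm
  | mix _ _ ih1 ih2 => exact DerivLBV.trans ih1 (deriv_mix ih2)
  | unit _ ih => exact DerivLBV.trans ih (.eqv (bigPar_unit _))
  | par _ ih => exact DerivLBV.trans ih (.eqv (bigPar_par _ _ _))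
  | cop _ _ ih1 ih2 => exact DerivLBV.trans ih1 (deriv_copL ih2)

/-! ### Splitting -/

/-- The par of `Γ` splits against `R` and `T`. -/
def Splits (R T : St) (Γ : Multiset St) : Prop :=
  ∃ P₁ P₂ : St, DerivLBV (.par P₁ P₂) (bigPar Γ) ∧
    ProofLBV (.par R P₁) ∧ ProofLBV (.par T P₂)

theorem Splits.mono {R T : St} {Γ Δ : Multiset St} (h : Splits R T Γ)
    (hd : DerivLBV (bigPar Γ) (bigPar Δ)) : Splits R T Δ := by
  obtain ⟨P₁, P₂, h, h1, h2⟩ := h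
  exact ⟨P₁, P₂, h.trans hd, h1, h2⟩

theorem stable_splits (R T : St) : Stable (Splits R T) where
  mix h1 h2 := h1.mono (deriv_mix (proof_of_seq h2))
  unit h := h.mono (.eqv (bigPar_unit _))
  par h := h.mono (.eqv (bigPar_par _ _ _))
  copL h1 h2 := h1.mono (deriv_copL (proof_of_seq h2))
  copR h1 h2 := h2.mono (deriv_copR (proof_of_seq h1))

theorem principal_splits (R T : St) : Principal (Splits R T) (.cop R T) := fun Γ Δ h1 h2 =>
  ⟨bigPar Γ, bigPar Δ, .eqv (bigPar_add _ _).symm,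
    DerivLBV.trans (proof_of_seq h1) (.eqv (bigPar_cons _ _)),
    DerivLBV.trans (proof_of_seq h2) (.eqv (bigPar_cons _ _))⟩

/-- Shallow splitting for LBV.
If `[(R,T),P]` is provable in LBV, then there exist structures `P₁`, `P₂`
such that there is a derivation in LBV from `[P₁,P₂]` to `P`, and both
`[R,P₁]` and `[T,P₂]` are provable in LBV. -/
theorem shallow_splitting (R T P : St)
    (h : ProofLBV (.par (.cop R T) P)) :
    ∃ P₁ P₂ : St,
      DerivLBV (.par P₁ P₂) P ∧
      ProofLBV (.par R P₁) ∧ ProofLBV (.par T P₂) := by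
  have hs : Seq (St.cop R T ::ₘ {P}) := Seq.par_inv (Γ := 0) (seq_of_proof h)
  obtain ⟨P₁, P₂, hd, h1, h2⟩ := hs.elim (stable_splits R T) (principal_splits R T)
  exact ⟨P₁, P₂, hd.trans (.eqv (bigPar_singleton P)), h1, h2⟩

end LBV
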